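/- Let D ⊂ [-π,π] be a Borel set with non-empty interior and M ⊂ ℤ a finite set. Let V(D) be the set of x ∈ ℓ∞(ℤ) such that the functional f ↦ Σ_t x(t) f̂_t vanishes on all f ∈ A supported in D. If x₁, x₂ ∈ V(D) and x₁(t) = x₂(t) for all t ∉ M, then x₁ = x₂. That is, signals with spectral gap D are uniquely determined by their values outside any finite set. -/

import Mathlib

/-!
The difference `y = x₁ - x₂` is finitely supported and inherits the spectral gap `D`. It defines the
trigonometric polynomial `P(v) = ∑ t, y(t) exp (-2πitv)`. If a Schwartz function `f` is supported in
`D` (after the rescaling `ω = 2πv` of `[-π, π]` to a period of length `1`), Poisson summation shows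
that the values `𝓕 f t` at the integers are the Fourier coefficients of a function in the Wiener
algebra vanishing off `D`. The spectral gap therefore says `∫ f P = ∑ t, y(t) 𝓕 f t = 0` for all
such `f`, so `P` vanishes on the interior of `D`. As `P` is analytic it is zero, and so are its
coefficients `y(t)`.
-/

open Real

/-- `x ∈ ℓ∞(ℤ)` has the spectral gap `D`: the functional `f ↦ Σ_t x(t) f̂_t` vanishes on every
`f` in the Wiener algebra (given by its absolutely summable coefficient sequence `a`, so that
`f(ω) = Σ_k a_k e^{iωk}`) that vanishes on `[-π,π] \ D`, i.e. is supported in `D`. -/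
def HasSpectralGap (D : Set ℝ) (x : ℤ → ℂ) : Prop :=
  ∀ a : ℤ → ℂ, Summable (fun k : ℤ => ‖a k‖) →
    (∀ ω ∈ Set.Icc (-Real.pi) Real.pi, ω ∉ D →
      (∑' k : ℤ, a k * Complex.exp (Complex.I * k * ω)) = 0) →
    (∑' t : ℤ, x t * a t) = 0

open MeasureTheory Set Filter Topology
open scoped FourierTransform SchwartzMap

section TrigonometricPolynomial

variable {T : ℝ}

theorem analyticOnNhd_of_mem_span_fourier {p : C(AddCircle T, ℂ)}
    (hp : p ∈ Submodule.span ℂ (range (fourier (T := T)))) :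
    AnalyticOnNhd ℝ (fun x : ℝ => p x) univ := by
  induction hp using Submodule.span_induction with
  | mem p hp =>
    obtain ⟨n, rfl⟩ := hp
    intro x _
    simp only [fourier_coe_apply]
    have hofReal : AnalyticAt ℝ Complex.ofReal x := Complex.ofRealCLM.analyticAt x
    exact (analyticAt_cexp.restrictScalars (𝕜 := ℝ)).comp (analyticAt_const.mul hofReal).div_const
  | zero => exact analyticOnNhd_const
  | add p q _ _ hp hq => exact hp.add hq
  | smul c p _ hp => exact fun x hx => (hp x hx).const_smul

theorem eq_zero_of_mem_span_fourier_of_eventually_eq_zero {p : C(AddCircle T, ℂ)}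
    (hp : p ∈ Submodule.span ℂ (range (fourier (T := T)))) {x₀ : ℝ}
    (hzero : ∀ᶠ x : ℝ in 𝓝 x₀, p x = 0) : p = 0 := by
  have hp_coe : (fun x : ℝ => p x) = fun _ => 0 :=
    (analyticOnNhd_of_mem_span_fourier hp).eq_of_eventuallyEq analyticOnNhd_const hzero
  ext x
  induction x using QuotientAddGroup.induction_on with
  | H x => exact congrFun hp_coe x

theorem linearIndependent_fourier [Fact (0 < T)] :
    LinearIndependent ℂ (fourier (T := T)) :=
  .of_comp (ContinuousMap.toLp (E := ℂ) 2 AddCircle.haarAddCircle ℂ).toLinearMap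
    orthonormal_fourier.linearIndependent

end TrigonometricPolynomial

theorem sum_mul_fourier_intCast_eq_integral (s : Finset ℤ) (y : ℤ → ℂ) {f : ℝ → ℂ}
    (hf : Integrable f) :
    ∑ t ∈ s, y t * 𝓕 f t =
      ∫ v : ℝ, f v * (∑ t ∈ s, y t • fourier (-t) : C(UnitAddCircle, ℂ)) v := by
  have hprod_int (t : ℤ) : Integrable fun v : ℝ => fourier (-t) (v : UnitAddCircle) * f v :=
    hf.bdd_mul (c := 1) (by fun_prop) (.of_forall fun v => (Circle.norm_coe _).le)
  have hfourier (t : ℤ) : 𝓕 f t = ∫ v : ℝ, fourier (-t) (v : UnitAddCircle) * f v := by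
    rw [Real.fourier_real_eq_integral_exp_smul]
    congr! 2 with v
    rw [fourier_coe_apply]
    congr 2
    push_cast
    ring
  simp_rw [hfourier, ← integral_const_mul]
  rw [← integral_finsetSum _ fun t _ => (hprod_int t).const_mul (y t)]
  congr! 2 with v
  simp only [ContinuousMap.sum_apply, ContinuousMap.smul_apply, smul_eq_mul, Finset.mul_sum]
  exact Finset.sum_congr rfl fun t _ => by ring

theorem summable_norm_schwartzMap_intCast {E : Type*} [NormedAddCommGroup E] [NormedSpace ℝ E]
    (f : 𝓢(ℝ, E)) : Summable fun n : ℤ => ‖f n‖ :=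
  summable_of_isBigO (Real.summable_abs_int_rpow one_lt_two)
    ((f.isBigO_cocompact_rpow (-2)).norm_left.comp_tendsto Int.tendsto_coe_cofinite)

theorem summable_mul_of_bddAbove_norm {ι R : Type*} [NonUnitalNormedRing R] [CompleteSpace R]
    {x a : ι → R} (hx : BddAbove (range fun i => ‖x i‖)) (ha : Summable fun i => ‖a i‖) :
    Summable fun i => x i * a i := by
  obtain ⟨C, hC⟩ := hx
  refine .of_norm_bounded (ha.mul_left C) fun i => (norm_mul_le _ _).trans ?_
  exact mul_le_mul_of_nonneg_right (hC (mem_range_self i)) (norm_nonneg _)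

namespace HasSpectralGap

variable {D : Set ℝ} {x y : ℤ → ℂ}

theorem sub (hx : HasSpectralGap D x) (hy : HasSpectralGap D y)
    (hx_bdd : BddAbove (range fun t => ‖x t‖)) (hy_bdd : BddAbove (range fun t => ‖y t‖)) :
    HasSpectralGap D (x - y) := by
  intro a ha hzero
  simp only [Pi.sub_apply, sub_mul]
  rw [(summable_mul_of_bddAbove_norm hx_bdd ha).tsum_sub (summable_mul_of_bddAbove_norm hy_bdd ha),
    hx a ha hzero, hy a ha hzero, sub_zero]

theorem tsum_mul_fourier_eq_zero (hy : HasSpectralGap D y) (f : 𝓢(ℝ, ℂ))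
    (hf : Function.support f ⊆ (2 * π * ·) ⁻¹' (D ∩ Ioo (-π) π)) :
    ∑' t : ℤ, y t * 𝓕 f t = 0 := by
  refine hy (fun t => 𝓕 f t) (summable_norm_schwartzMap_intCast (𝓕 f)) fun ω hω hωD => ?_
  have hexp (k : ℤ) :
      Complex.exp (Complex.I * k * ω) = fourier k ((ω / (2 * π) : ℝ) : UnitAddCircle) := by
    rw [fourier_coe_apply]
    congr 1
    push_cast
    field_simp
  have hperiodization (n : ℤ) : f (ω / (2 * π) + n) = 0 := by
    by_contra hne
    have hmem : ω + 2 * π * n ∈ D ∩ Ioo (-π) π := by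
      have : 2 * π * (ω / (2 * π) + n) = ω + 2 * π * n := by field_simp
      exact this ▸ hf hne
    obtain rfl : n = 0 := by
      have hlt : (n : ℝ) < 1 := by nlinarith [pi_pos, hmem.2.2, hω.1]
      have hgt : (-1 : ℝ) < n := by nlinarith [pi_pos, hmem.2.1, hω.2]
      have : n < 1 := by exact_mod_cast hlt
      have : -1 < n := by exact_mod_cast hgt
      lia
    exact hωD (by simpa using hmem.1)
  simp only [hexp, ← f.tsum_eq_tsum_fourier, hperiodization, tsum_zero]

theorem sum_smul_fourier_apply_eq_zero (hy : HasSpectralGap D y) {s : Finset ℤ}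
    (hs : ∀ t ∉ s, y t = 0) {v : ℝ} (hv : 2 * π * v ∈ interior D ∩ Ioo (-π) π) :
    (∑ t ∈ s, y t • fourier (-t) : C(UnitAddCircle, ℂ)) v = 0 := by
  set p : C(UnitAddCircle, ℂ) := ∑ t ∈ s, y t • fourier (-t)
  set U : Set ℝ := (2 * π * ·) ⁻¹' (interior D ∩ Ioo (-π) π)
  have hU : IsOpen U := (isOpen_interior.inter isOpen_Ioo).preimage (by fun_prop)
  have hp_cont : Continuous fun v : ℝ => p v := by fun_prop
  have hp_ae : ∀ᵐ v : ℝ, v ∈ U → p v = 0 := by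
    refine hU.ae_eq_zero_of_integral_contDiff_smul_eq_zero
      (hp_cont.locallyIntegrable.locallyIntegrableOn U) fun g hg_smooth hg_compact hg_supp => ?_
    let f : 𝓢(ℝ, ℂ) := (hg_compact.comp_left Complex.ofReal_zero).toSchwartzMap
      (Complex.ofRealCLM.contDiff.comp hg_smooth)
    have hf_apply (v : ℝ) : f v = g v := rfl
    have hf_supp : Function.support f ⊆ (2 * π * ·) ⁻¹' (D ∩ Ioo (-π) π) := fun w hw =>
      inter_subset_inter_left (Ioo (-π) π) interior_subset <|
        hg_supp <| subset_tsupport g fun hgw : g w = 0 => hw (by simp [hf_apply, hgw])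
    calc ∫ v, g v • p v = ∫ v, f v * p v := by simp [hf_apply]
      _ = ∑ t ∈ s, y t * 𝓕 f t := (sum_mul_fourier_intCast_eq_integral s y f.integrable).symm
      _ = ∑' t : ℤ, y t * 𝓕 f t := (tsum_eq_sum fun t ht => by rw [hs t ht, zero_mul]).symm
      _ = 0 := hy.tsum_mul_fourier_eq_zero f hf_supp
  exact Measure.eqOn_open_of_ae_eq ((ae_restrict_iff' hU.measurableSet).2 hp_ae) hU
    hp_cont.continuousOn continuousOn_const hv

theorem eq_zero_of_eq_zero_off_finset (hy : HasSpectralGap D y)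
    (hD : (interior D ∩ Ioo (-π) π).Nonempty) {s : Finset ℤ} (hs : ∀ t ∉ s, y t = 0) :
    y = 0 := by
  obtain ⟨ω, hω⟩ := hD
  have hnhds : ∀ᶠ v : ℝ in 𝓝 (ω / (2 * π)), 2 * π * v ∈ interior D ∩ Ioo (-π) π := by
    refine ContinuousAt.eventually_mem (by fun_prop) ?_
    rw [mul_div_cancel₀ ω two_pi_pos.ne']
    exact (isOpen_interior.inter isOpen_Ioo).mem_nhds hω
  have hspan : (∑ t ∈ s, y t • fourier (-t) : C(UnitAddCircle, ℂ)) ∈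
      Submodule.span ℂ (range fourier) :=
    Submodule.sum_mem _ fun t _ =>
      Submodule.smul_mem _ _ (Submodule.subset_span (mem_range_self (-t)))
  have hsum : (∑ t ∈ s, y t • fourier (-t) : C(UnitAddCircle, ℂ)) = 0 :=
    eq_zero_of_mem_span_fourier_of_eventually_eq_zero hspan
      (hnhds.mono fun v hv => hy.sum_smul_fourier_apply_eq_zero hs hv)
  funext t
  by_cases ht : t ∈ s
  · exact linearIndependent_iff'.1 (linearIndependent_fourier.comp _ neg_injective) s y hsum t ht
  · exact hs t ht

end HasSpectralGap

theorem recovery_of_finitely_many_values_general {D : Set ℝ}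
    (hD : (interior D ∩ Ioo (-π) π).Nonempty) {M : Finset ℤ} {x₁ x₂ : ℤ → ℂ}
    (hb₁ : BddAbove (range fun t => ‖x₁ t‖)) (hb₂ : BddAbove (range fun t => ‖x₂ t‖))
    (hg₁ : HasSpectralGap D x₁) (hg₂ : HasSpectralGap D x₂)
    (hagree : ∀ t ∉ M, x₁ t = x₂ t) : x₁ = x₂ :=
  sub_eq_zero.1 <| (hg₁.sub hg₂ hb₁ hb₂).eq_zero_of_eq_zero_off_finset hD fun t ht =>
    sub_eq_zero.2 (hagree t ht)

/-- Signals in `ℓ∞(ℤ)` with a common spectral gap `D` (a Borel subset of `[-π,π]` with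
non-empty interior) are uniquely determined by their values outside any finite set `M`. -/
theorem recovery_of_finitely_many_values (D : Set ℝ)
    (hD : D ⊆ Set.Icc (-Real.pi) Real.pi) (hDborel : MeasurableSet D)
    (hint : (interior D).Nonempty)
    (M : Finset ℤ) (x₁ x₂ : ℤ → ℂ)
    (hb₁ : BddAbove (Set.range fun t : ℤ => ‖x₁ t‖))
    (hb₂ : BddAbove (Set.range fun t : ℤ => ‖x₂ t‖))
    (hg₁ : HasSpectralGap D x₁) (hg₂ : HasSpectralGap D x₂)
    (hagree : ∀ t : ℤ, t ∉ M → x₁ t = x₂ t) :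
    x₁ = x₂ :=
  recovery_of_finitely_many_values_general
    (hint.mono fun _ hω => ⟨hω, interior_Icc (α := ℝ) ▸ interior_mono hD hω⟩) hb₁ hb₂ hg₁ hg₂ hagree
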